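/- arXiv:2002.06552 — 9 statements merged into one kernel-verified Lean document; each statement's English description precedes it below -/
import Mathlib

section
/- Let M and N be positive integers with N dividing M, and let d be a natural number with 0 ≤ d < M/N. Let x : {0,…,N−1} → ℂ be arbitrary. Define X : {0,…,M−1} → ℂ by X[k] = ∑_{n=0}^{N−1} x[n]·exp(−2πi·p·n/N) whenever k = d + p·(M/N) for some p ∈ {0,…,N−1}, and X[k] = 0 for all other k. Then for every ℓ ∈ {0,…,M−1}, the M-point inverse DFT x′[ℓ] := (1/M)·∑_{k=0}^{M−1} X[k]·exp(2πi·k·ℓ/M) satisfies x′[ℓ] = (N/M)·exp(2πi·ℓ·d/M)·x[ℓ mod N]. -/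
open Finset Complex

theorem geom_aux (N : ℕ) (hN : 0 < N) (l n : ℕ) (hn : n < N) :
    ∑ p ∈ Finset.range N, Complex.exp (2 * (Real.pi : ℂ) * Complex.I * p * ((l : ℂ) - n) / N)
      = if n = l % N then (N : ℂ) else 0 := by
  have hN0 : (N : ℂ) ≠ 0 := by exact_mod_cast hN.ne'
  set z := Complex.exp (2 * (Real.pi : ℂ) * Complex.I * ((l : ℂ) - n) / N) with hz
  have hp : ∀ p : ℕ,
      Complex.exp (2 * (Real.pi : ℂ) * Complex.I * p * ((l : ℂ) - n) / N) = z ^ p := by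
    intro p
    rw [hz, ← Complex.exp_nat_mul]
    congr 1
    ring
  have hzN : z ^ N = 1 := by
    rw [hz, ← Complex.exp_nat_mul, Complex.exp_eq_one_iff]
    refine ⟨(l : ℤ) - n, ?_⟩
    push_cast
    field_simp
  have hz1 : z = 1 ↔ n = l % N := by
    rw [hz, Complex.exp_eq_one_iff]
    have key : n = l % N ↔ ∃ m : ℤ, (l : ℤ) - n = m * N := by
      constructor
      · intro h
        refine ⟨((l / N : ℕ) : ℤ), ?_⟩
        have := Nat.div_add_mod l N
        rw [← h] at this
        have h2 : ((N * (l / N) + n : ℕ) : ℤ) = l := by exact_mod_cast this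
        rw [← h2, Nat.cast_add, Nat.cast_mul]
        ring
      · rintro ⟨m, hm⟩
        have h1 : (l : ℤ) % N = n := by
          have : (l : ℤ) = n + m * N := by linarith
          rw [this, Int.add_mul_emod_self_right]
          exact Int.emod_eq_of_lt (by positivity) (by exact_mod_cast hn)
        exact_mod_cast h1.symm
    rw [key]
    refine exists_congr fun m => ?_
    have hpi := Complex.two_pi_I_ne_zero
    rw [div_eq_iff hN0, mul_comm (m : ℂ), mul_assoc (2 * (Real.pi : ℂ) * Complex.I) (m : ℂ),
      mul_right_inj' hpi]
    constructor
    · intro h; exact_mod_cast h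
    · intro h; exact_mod_cast h
  simp_rw [hp]
  split_ifs with h
  · rw [hz1.2 h]; simp
  · have hne : z ≠ 1 := fun h' => h (hz1.1 h')
    rw [geom_sum_eq hne, hzN]; simp

/-- Time-domain characterization of an IFDMA stream (Eq. (2) of the paper):
the `M`-point inverse DFT of the DFT-precoded block mapped to the evenly-spaced
subcarriers `{d + p·(M/N)}` equals the original symbol block repeated and
modulated by a phase ramp. -/
theorem ifdma_time_domain
    (M N : ℕ) (hN : 0 < N) (hdvd : N ∣ M) (d : ℕ) (hd : d < M / N)
    (x : ℕ → ℂ) (X : ℕ → ℂ)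
    (hX_on : ∀ p < N, X (d + p * (M / N)) =
      ∑ n ∈ Finset.range N, x n * Complex.exp (-(2 * (Real.pi : ℂ) * Complex.I * p * n / N)))
    (hX_off : ∀ k < M, (¬ ∃ p < N, k = d + p * (M / N)) → X k = 0)
    (ℓ : ℕ) (hℓ : ℓ < M) :
    (1 / (M : ℂ)) *
        ∑ k ∈ Finset.range M, X k * Complex.exp (2 * (Real.pi : ℂ) * Complex.I * k * ℓ / M)
      = ((N : ℂ) / (M : ℂ)) * Complex.exp (2 * (Real.pi : ℂ) * Complex.I * ℓ * d / M) *
          x (ℓ % N) := by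
  obtain ⟨K, rfl⟩ := hdvd
  rw [Nat.mul_div_cancel_left K hN] at hd hX_on hX_off
  have hK : 0 < K := by omega
  have hN0 : (N : ℂ) ≠ 0 := by exact_mod_cast hN.ne'
  have hK0 : (K : ℂ) ≠ 0 := by exact_mod_cast hK.ne'
  have hsum : ∑ k ∈ Finset.range (N * K),
        X k * Complex.exp (2 * (Real.pi : ℂ) * Complex.I * k * ℓ / (N * K : ℕ))
      = ∑ p ∈ Finset.range N, X (d + p * K) *
        Complex.exp (2 * (Real.pi : ℂ) * Complex.I * (d + p * K : ℕ) * ℓ / (N * K : ℕ)) := by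
    symm
    have hinj : Function.Injective (fun p : ℕ => d + p * K) := by
      intro a b hab
      have : a * K = b * K := Nat.add_left_cancel hab
      exact Nat.eq_of_mul_eq_mul_right hK this
    rw [← Finset.sum_image (s := Finset.range N) (g := fun p : ℕ => d + p * K)
      (f := fun k : ℕ => X k *
        Complex.exp (2 * (Real.pi : ℂ) * Complex.I * k * ℓ / (N * K : ℕ))) hinj.injOn]
    apply Finset.sum_subset
    · intro k hk
      obtain ⟨p, hp, rfl⟩ := Finset.mem_image.1 hk
      have hp := Finset.mem_range.1 hp
      apply Finset.mem_range.2
      have : (p + 1) * K ≤ N * K := Nat.mul_le_mul_right K hp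
      nlinarith
    · intro k hk hk'
      rw [hX_off k (Finset.mem_range.1 hk), zero_mul]
      rintro ⟨p, hp, rfl⟩
      exact hk' (Finset.mem_image.2 ⟨p, Finset.mem_range.2 hp, rfl⟩)
  have hterm : ∀ p ∈ Finset.range N, X (d + p * K) *
        Complex.exp (2 * (Real.pi : ℂ) * Complex.I * (d + p * K : ℕ) * ℓ / (N * K : ℕ))
      = ∑ n ∈ Finset.range N,
        Complex.exp (2 * (Real.pi : ℂ) * Complex.I * ℓ * d / (N * K : ℕ)) * x n *
        Complex.exp (2 * (Real.pi : ℂ) * Complex.I * p * ((ℓ : ℂ) - n) / N) := by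
    intro p hp
    rw [hX_on p (Finset.mem_range.1 hp), Finset.sum_mul]
    refine Finset.sum_congr rfl fun n _ => ?_
    rw [mul_assoc (x n), ← Complex.exp_add, mul_comm (Complex.exp _) (x n), mul_assoc (x n), ← Complex.exp_add]
    congr 2
    push_cast
    field_simp
    ring
  rw [hsum, Finset.sum_congr rfl hterm, Finset.sum_comm]
  simp_rw [← Finset.mul_sum]
  rw [Finset.sum_congr rfl fun n hn => by rw [geom_aux N hN ℓ n (Finset.mem_range.1 hn)]]
  simp only [mul_ite, mul_zero]
  rw [Finset.sum_ite_eq', if_pos (Finset.mem_range.2 (Nat.mod_lt _ hN))]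
  ring
end

section
/- (Theorem 1: full loading is possible in IFDMA.) Let m be a natural number and let n_1, …, n_K ∈ {0,1,…,m} be such that ∑_{k=1}^K 2^{n_k} ≤ 2^m. Then there exist pairwise disjoint sets S_1, …, S_K ⊆ {0,1,…,2^m−1} such that for each k, S_k = {d_k + i·2^{m−n_k} : i = 0,1,…,2^{n_k}−1} for some offset d_k with 0 ≤ d_k < 2^{m−n_k}; that is, each request for 2^{n_k} subcarriers receives an evenly-spaced set of size 2^{n_k} with spacing 2^{m−n_k}, and the sets of different requests do not overlap. -/
/-- The evenly-spaced set of size `2^n` in `{0,…,2^m−1}` with offset `d`: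
`{d + i·2^{m−n} : i = 0,…,2^n−1}`. -/
def evenSpaced (m n d : ℕ) : Finset ℕ :=
  Finset.image (fun i => d + i * 2 ^ (m - n)) (Finset.range (2 ^ n))

theorem mem_evenSpaced_iff {m n d x : ℕ} (hn : n ≤ m) (hd : d < 2 ^ (m - n)) :
    x ∈ evenSpaced m n d ↔ x < 2 ^ m ∧ x % 2 ^ (m - n) = d := by
  have hp : 2 ^ m = 2 ^ (m - n) * 2 ^ n := by
    rw [← pow_add]; congr 1; omega
  unfold evenSpaced
  simp only [Finset.mem_image, Finset.mem_range]
  constructor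
  · rintro ⟨i, hi, rfl⟩
    refine ⟨?_, ?_⟩
    · rw [hp]
      have : (i + 1) * 2 ^ (m - n) ≤ 2 ^ n * 2 ^ (m - n) := Nat.mul_le_mul_right _ hi
      nlinarith
    · rw [Nat.add_mul_mod_self_right, Nat.mod_eq_of_lt hd]
  · rintro ⟨hx, rfl⟩
    refine ⟨x / 2 ^ (m - n), ?_, ?_⟩
    · rw [hp] at hx
      exact Nat.div_lt_of_lt_mul hx
    · exact Nat.mod_add_div' x _

theorem exists_offsets (m : ℕ) (n : ℕ → ℕ) (s : Finset ℕ) :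
    (∀ k ∈ s, n k ≤ m) → ∑ k ∈ s, 2 ^ n k ≤ 2 ^ m →
    ∃ d : ℕ → ℕ, (∀ k ∈ s, d k < 2 ^ (m - n k)) ∧
      ∀ k ∈ s, ∀ l ∈ s, k ≠ l →
        Disjoint (evenSpaced m (n k) (d k)) (evenSpaced m (n l) (d l)) := by
  induction s using Finset.induction_on_min_value n with
  | empty => intro _ _; exact ⟨fun _ => 0, by simp, by simp⟩
  | insert a s ha hmin ih =>
    intro hn hsum
    rw [Finset.sum_insert ha] at hsum
    have hpos : 0 < 2 ^ n a := by positivity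
    obtain ⟨d, hd, hdis⟩ := ih (fun k hk => hn k (Finset.mem_insert_of_mem hk)) (by omega)
    have hna : n a ≤ m := hn a (Finset.mem_insert_self _ _)
    -- a free subcarrier
    obtain ⟨x, hx, hxU⟩ : ∃ x ∈ Finset.range (2 ^ m),
        x ∉ s.biUnion (fun k => evenSpaced m (n k) (d k)) := by
      apply Finset.exists_mem_notMem_of_card_lt_card
      have h1 : (s.biUnion (fun k => evenSpaced m (n k) (d k))).card ≤ ∑ k ∈ s, 2 ^ n k := by
        refine Finset.card_biUnion_le.trans (Finset.sum_le_sum fun k _ => ?_)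
        unfold evenSpaced
        exact Finset.card_image_le.trans (by simp)
      rw [Finset.card_range]
      omega
    have hda : x % 2 ^ (m - n a) < 2 ^ (m - n a) := Nat.mod_lt _ (by positivity)
    have key : ∀ k ∈ s, Disjoint (evenSpaced m (n k) (d k))
        (evenSpaced m (n a) (x % 2 ^ (m - n a))) := by
      intro k hk
      rw [Finset.disjoint_left]
      intro y hy hy'
      have hnk := hn k (Finset.mem_insert_of_mem hk)
      rw [mem_evenSpaced_iff hnk (hd k hk)] at hy
      rw [mem_evenSpaced_iff hna hda] at hy'
      apply hxU
      rw [Finset.mem_biUnion]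
      refine ⟨k, hk, (mem_evenSpaced_iff hnk (hd k hk)).2 ⟨Finset.mem_range.1 hx, ?_⟩⟩
      have hle := hmin k hk
      have hdvd : 2 ^ (m - n k) ∣ 2 ^ (m - n a) := pow_dvd_pow 2 (by omega)
      have h2 : y ≡ x [MOD 2 ^ (m - n k)] := Nat.ModEq.of_dvd hdvd hy'.2
      exact Eq.trans (Eq.symm h2) hy.2
    have hne : ∀ k ∈ s, k ≠ a := fun k hk h => ha (h ▸ hk)
    refine ⟨Function.update d a (x % 2 ^ (m - n a)), ?_, ?_⟩
    · intro k hk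
      rcases Finset.mem_insert.1 hk with rfl | hk
      · simpa using hda
      · simpa [Function.update_of_ne (hne k hk)] using hd k hk
    · intro k hk l hl hkl
      rcases Finset.mem_insert.1 hk with rfl | hks <;> rcases Finset.mem_insert.1 hl with rfl | hls
      · exact absurd rfl hkl
      · rw [Function.update_self, Function.update_of_ne (hne l hls)]
        exact (key l hls).symm
      · rw [Function.update_self, Function.update_of_ne (hne k hks)]
        exact key k hks
      · rw [Function.update_of_ne (hne k hks), Function.update_of_ne (hne l hls)]
        exact hdis k hks l hls hkl

/-- Theorem 1 (full loading is possible in IFDMA): if `∑_k 2^{n_k} ≤ 2^m`, then the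
requests can be granted pairwise disjoint evenly-spaced subcarrier sets, each of size
`2^{n_k}` with spacing `2^{m−n_k}`. -/
theorem ifdma_full_loading (m K : ℕ) (n : ℕ → ℕ)
    (hn : ∀ k < K, n k ≤ m)
    (hsum : ∑ k ∈ Finset.range K, 2 ^ n k ≤ 2 ^ m) :
    ∃ S : ℕ → Finset ℕ,
      (∀ k < K, ∀ l < K, k ≠ l → Disjoint (S k) (S l)) ∧
      (∀ k < K, S k ⊆ Finset.range (2 ^ m)) ∧
      (∀ k < K, ∃ d < 2 ^ (m - n k), S k = evenSpaced m (n k) d) := by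
  obtain ⟨d, hd, hdis⟩ := exists_offsets m n (Finset.range K)
    (fun k hk => hn k (Finset.mem_range.1 hk)) hsum
  refine ⟨fun k => evenSpaced m (n k) (d k), ?_, ?_, ?_⟩
  · intro k hk l hl hkl
    exact hdis k (Finset.mem_range.2 hk) l (Finset.mem_range.2 hl) hkl
  · intro k hk x hx
    exact Finset.mem_range.2
      ((mem_evenSpaced_iff (hn k hk) (hd k (Finset.mem_range.2 hk))).1 hx).1
  · intro k hk
    exact ⟨d k, hd k (Finset.mem_range.2 hk), rfl⟩
end

section
/- (Invariant preservation of the min-small-change policy.) Let m, n be natural numbers with n ≤ m. Suppose F ⊆ {0,1,…,2^m−1} is a disjoint union of aligned blocks whose sizes are pairwise distinct powers of two, and suppose 2^n ≤ |F|. Then there exists an aligned block A ⊆ F with |A| = 2^n such that F \ A is again a disjoint union of aligned blocks whose sizes are pairwise distinct powers of two (where the empty set counts as such a union). -/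
/-- The aligned block of size `2^i` with index `c`: `{c·2^i, …, (c+1)·2^i−1}`. -/
def alignedBlock (i c : ℕ) : Finset ℕ := Finset.Ico (c * 2 ^ i) ((c + 1) * 2 ^ i)

/-- `F ⊆ {0,…,2^m−1}` is a disjoint union of aligned blocks whose sizes are pairwise
distinct powers of two (the empty union being allowed). -/
def GoodFree (m : ℕ) (F : Finset ℕ) : Prop :=
  ∃ (E : Finset ℕ) (c : ℕ → ℕ),
    (∀ i ∈ E, i ≤ m ∧ c i < 2 ^ (m - i)) ∧
    (∀ i ∈ E, ∀ j ∈ E, i ≠ j → Disjoint (alignedBlock i (c i)) (alignedBlock j (c j))) ∧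
    F = E.biUnion fun i => alignedBlock i (c i)

theorem mem_ab (i c x : ℕ) : x ∈ alignedBlock i c ↔ c * 2 ^ i ≤ x ∧ x < c * 2 ^ i + 2 ^ i := by
  unfold alignedBlock
  rw [Finset.mem_Ico, add_mul, one_mul]

theorem card_ab (i c : ℕ) : (alignedBlock i c).card = 2 ^ i := by
  unfold alignedBlock
  rw [Nat.card_Ico, add_mul, one_mul, Nat.add_sub_cancel_left]

theorem mem_new (i j c x : ℕ) (h : j ≤ i) : x ∈ alignedBlock j (c * 2 ^ (i - j) + 1) ↔
    c * 2 ^ i + 2 ^ j ≤ x ∧ x < c * 2 ^ i + 2 ^ (j + 1) := by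
  have e : 2 ^ (i - j) * 2 ^ j = 2 ^ i := by rw [← pow_add]; congr 1; omega
  rw [mem_ab, add_mul, mul_assoc, e, pow_succ]
  omega

/-- Invariant preservation of the min-small-change policy: if the free set `F` is a
disjoint union of aligned blocks of pairwise distinct power-of-two sizes and
`2^n ≤ |F|`, then some aligned block `A ⊆ F` of size `2^n` can be granted so that
`F \ A` again has this form. -/
theorem min_small_change_invariant (m n : ℕ) (hnm : n ≤ m)
    (F : Finset ℕ) (hF : GoodFree m F) (hcard : 2 ^ n ≤ F.card) :
    ∃ a < 2 ^ (m - n), alignedBlock n a ⊆ F ∧ GoodFree m (F \ alignedBlock n a) := by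
  obtain ⟨E, c, hb, hd, rfl⟩ := hF
  have hex : ∃ i, i ∈ E ∧ n ≤ i := by
    by_contra! hcon
    have h1 : (E.biUnion fun i => alignedBlock i (c i)).card ≤ ∑ i ∈ E, 2 ^ i := by
      refine Finset.card_biUnion_le.trans (Finset.sum_le_sum fun i _ => (card_ab _ _).le)
    have h2 : ∑ i ∈ E, 2 ^ i < 2 ^ n := Nat.geomSum_lt le_rfl hcon
    omega
  classical
  set i := Nat.find hex with hi
  obtain ⟨hiE, hni⟩ := Nat.find_spec hex
  rw [← hi] at hiE hni
  have hmin : ∀ k ∈ E, n ≤ k → i ≤ k := fun k hk hnk => Nat.find_min' hex ⟨hk, hnk⟩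
  clear_value i
  obtain ⟨him, hci⟩ := hb i hiE
  have hA : ∀ x, x ∈ alignedBlock n (c i * 2 ^ (i - n)) ↔
      c i * 2 ^ i ≤ x ∧ x < c i * 2 ^ i + 2 ^ n := by
    intro x
    have e : 2 ^ (i - n) * 2 ^ n = 2 ^ i := by rw [← pow_add]; congr 1; omega
    rw [mem_ab, mul_assoc, e]
  have hpn : 2 ^ n ≤ 2 ^ i := Nat.pow_le_pow_right (by norm_num) hni
  have hAi : ∀ x, x ∈ alignedBlock n (c i * 2 ^ (i - n)) → x ∈ alignedBlock i (c i) := by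
    intro x hx
    rw [hA] at hx
    rw [mem_ab]
    omega
  have hNi : ∀ j, n ≤ j → j < i → ∀ x, x ∈ alignedBlock j (c i * 2 ^ (i - j) + 1) →
      x ∈ alignedBlock i (c i) := by
    intro j _ hj x hx
    rw [mem_new _ _ _ _ hj.le] at hx
    have : 2 ^ (j + 1) ≤ 2 ^ i := Nat.pow_le_pow_right (by norm_num) hj
    rw [mem_ab]
    omega
  have hNN : ∀ j k, j < k → k < i → Disjoint (alignedBlock j (c i * 2 ^ (i - j) + 1))
      (alignedBlock k (c i * 2 ^ (i - k) + 1)) := by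
    intro j k hjk hk
    rw [Finset.disjoint_left]
    intro x hx hx'
    rw [mem_new _ _ _ _ (by omega)] at hx hx'
    have : 2 ^ (j + 1) ≤ 2 ^ k := Nat.pow_le_pow_right (by norm_num) hjk
    omega
  have hNO : ∀ j k, n ≤ j → j < i → k ∈ E → k ≠ i →
      Disjoint (alignedBlock j (c i * 2 ^ (i - j) + 1)) (alignedBlock k (c k)) := by
    intro j k hj hji hk hki
    exact Finset.disjoint_of_subset_left (hNi j hj hji) (hd i hiE k hk hki.symm)
  refine ⟨c i * 2 ^ (i - n), ?_, ?_, ?_⟩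
  · have e : 2 ^ (m - n) = 2 ^ (m - i) * 2 ^ (i - n) := by rw [← pow_add]; congr 1; omega
    rw [e]
    exact Nat.mul_lt_mul_of_pos_right hci (by positivity)
  · intro x hx
    exact Finset.mem_biUnion.2 ⟨i, hiE, hAi x hx⟩
  · refine ⟨E.erase i ∪ Finset.Ico n i,
      fun j => if n ≤ j ∧ j < i then c i * 2 ^ (i - j) + 1 else c j, ?_, ?_, ?_⟩
    · intro j hj
      by_cases h : n ≤ j ∧ j < i
      · simp only [h, and_self, if_true]
        refine ⟨by omega, ?_⟩
        have e : 2 ^ (m - j) = 2 ^ (m - i) * 2 ^ (i - j) := by rw [← pow_add]; congr 1; omega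
        have h2 : 2 ^ 1 ≤ 2 ^ (i - j) := Nat.pow_le_pow_right (by norm_num) (by omega)
        have h3 := Nat.mul_le_mul_right (2 ^ (i - j)) (Nat.succ_le_of_lt hci)
        rw [Nat.succ_mul] at h3
        rw [e]
        omega
      · simp only [h, if_false]
        simp only [Finset.mem_union, Finset.mem_erase, Finset.mem_Ico, h, or_false] at hj
        exact hb j hj.2
    · intro j hj k hk hjk
      simp only [Finset.mem_union, Finset.mem_erase, Finset.mem_Ico] at hj hk
      by_cases h : n ≤ j ∧ j < i <;> by_cases h' : n ≤ k ∧ k < i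
      · simp only [if_pos h, if_pos h']
        rcases lt_or_gt_of_ne hjk with hl | hl
        · exact hNN j k hl h'.2
        · exact (hNN k j hl h.2).symm
      · simp only [if_pos h, if_neg h']
        have hk := hk.resolve_right h'
        exact hNO j k h.1 h.2 hk.2 hk.1
      · simp only [if_neg h, if_pos h']
        have hj := hj.resolve_right h
        exact (hNO k j h'.1 h'.2 hj.2 hj.1).symm
      · simp only [if_neg h, if_neg h']
        exact hd j (hj.resolve_right h).2 k (hk.resolve_right h').2 hjk
    · ext x
      simp only [Finset.mem_sdiff, Finset.mem_biUnion]
      constructor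
      · rintro ⟨⟨k, hk, hx⟩, hxA⟩
        by_cases hki : k = i
        · subst hki
          rw [hA] at hxA
          rw [mem_ab] at hx
          have hpos : 0 < 2 ^ n := by positivity
          have hne : x - c k * 2 ^ k ≠ 0 := by omega
          have l1 := Nat.pow_log_le_self 2 hne
          have l2 := Nat.lt_pow_succ_log_self (b := 2) (by norm_num) (x - c k * 2 ^ k)
          have l3 : n ≤ Nat.log 2 (x - c k * 2 ^ k) :=
            Nat.le_log_of_pow_le (by norm_num) (by omega)
          have l4 : Nat.log 2 (x - c k * 2 ^ k) < k :=
            Nat.log_lt_of_lt_pow hne (by omega)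
          refine ⟨Nat.log 2 (x - c k * 2 ^ k), ?_, ?_⟩
          · exact Finset.mem_union_right _ (Finset.mem_Ico.2 ⟨l3, l4⟩)
          · rw [if_pos ⟨l3, l4⟩, mem_new _ _ _ _ l4.le]
            rw [Nat.succ_eq_add_one] at l2
            omega
        · refine ⟨k, Finset.mem_union_left _ (Finset.mem_erase.2 ⟨hki, hk⟩), ?_⟩
          rw [if_neg]
          · exact hx
          · rintro ⟨h1, h2⟩
            have := hmin k hk h1
            omega
      · rintro ⟨k, hk, hx⟩
        by_cases h : n ≤ k ∧ k < i
        · rw [if_pos h] at hx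
          refine ⟨⟨i, hiE, hNi k h.1 h.2 x hx⟩, ?_⟩
          rw [hA]
          rw [mem_new _ _ _ _ h.2.le] at hx
          have : 2 ^ n ≤ 2 ^ k := Nat.pow_le_pow_right (by norm_num) h.1
          omega
        · rw [if_neg h] at hx
          simp only [Finset.mem_union, Finset.mem_erase, Finset.mem_Ico, h, or_false] at hk
          refine ⟨⟨k, hk.2, hx⟩, fun hxA => ?_⟩
          exact Finset.disjoint_left.1 (hd k hk.2 i hiE hk.1) hx (hAi x hxA)
end

section
/- (Corollary 3: subcarrier allocation for direct-conversion receivers.) Let m be a natural number, let s ∈ {0,1,…,2^m−1} be a designated unavailable subcarrier index (the DC subcarrier), and let n_1, …, n_K ∈ {0,1,…,m} be such that ∑_{k=1}^K 2^{n_k} ≤ 2^m − 1. Then there exist pairwise disjoint sets S_1, …, S_K ⊆ {0,1,…,2^m−1} \ {s} such that for each k, S_k = {d_k + i·2^{m−n_k} : i = 0,1,…,2^{n_k}−1} for some offset d_k with 0 ≤ d_k < 2^{m−n_k}. -/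
theorem ifdma_greedy (m s : ℕ) (n : ℕ → ℕ) (T : Finset ℕ) :
    (∀ k ∈ T, n k ≤ m) → (∑ k ∈ T, 2 ^ n k < 2 ^ m) →
    ∃ d : ℕ → ℕ, (∀ k ∈ T, d k < 2 ^ (m - n k)) ∧
      (∀ k ∈ T, s % 2 ^ (m - n k) ≠ d k) ∧
      (∀ k ∈ T, ∀ l ∈ T, k ≠ l → ∀ x : ℕ, x % 2 ^ (m - n k) = d k →
        x % 2 ^ (m - n l) = d l → False) := by
  induction T using Finset.induction_on_min_value n with
  | empty => intro _ _; exact ⟨fun _ => 0, by simp⟩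
  | insert a T ha hmin ih =>
    intro hn hsum
    rw [Finset.sum_insert ha] at hsum
    obtain ⟨d, hd, hds, hdd⟩ := ih (fun k hk => hn k (Finset.mem_insert_of_mem hk))
      (lt_of_le_of_lt (Nat.le_add_left _ _) hsum)
    have ham : n a ≤ m := hn a (Finset.mem_insert_self _ _)
    let B : Finset ℕ := insert (s % 2 ^ (m - n a)) (T.biUnion fun k =>
      (Finset.range (2 ^ (n k - n a))).image fun i => d k + i * 2 ^ (m - n k))
    have hB : B.card < 2 ^ (m - n a) := by
      have h1 : B.card ≤ (∑ k ∈ T, 2 ^ (n k - n a)) + 1 := by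
        refine (Finset.card_insert_le _ _).trans (Nat.add_le_add_right ?_ 1)
        refine Finset.card_biUnion_le.trans (Finset.sum_le_sum fun k _ => ?_)
        exact Finset.card_image_le.trans (by simp)
      have h2 : (∑ k ∈ T, 2 ^ (n k - n a)) * 2 ^ n a = ∑ k ∈ T, 2 ^ n k := by
        rw [Finset.sum_mul]
        refine Finset.sum_congr rfl fun k hk => ?_
        rw [← pow_add, Nat.sub_add_cancel (hmin k hk)]
      have h3 : 2 ^ (m - n a) * 2 ^ n a = 2 ^ m := by
        rw [← pow_add, Nat.sub_add_cancel ham]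
      refine lt_of_le_of_lt h1 (lt_of_mul_lt_mul_right (a := 2 ^ n a) ?_ (Nat.zero_le _))
      rw [add_mul, h2, h3]; omega
    obtain ⟨r, hr, hrB⟩ : ∃ r ∈ Finset.range (2 ^ (m - n a)), r ∉ B :=
      Finset.exists_mem_notMem_of_card_lt_card (by simpa using hB)
    have hrN := Finset.mem_range.1 hr
    have key : ∀ k ∈ T, ∀ x : ℕ, x % 2 ^ (m - n a) = r → x % 2 ^ (m - n k) = d k → False := by
      intro k hk x hx hxk
      have hkm := hn k (Finset.mem_insert_of_mem hk)
      have hak := hmin k hk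
      have hdvd : 2 ^ (m - n k) ∣ 2 ^ (m - n a) := pow_dvd_pow 2 (by omega)
      have hrk : r % 2 ^ (m - n k) = d k := by
        rw [← hx, Nat.mod_mod_of_dvd _ hdvd, hxk]
      apply hrB
      refine Finset.mem_insert_of_mem (Finset.mem_biUnion.2 ⟨k, hk, Finset.mem_image.2
        ⟨r / 2 ^ (m - n k), ?_, ?_⟩⟩)
      · rw [Finset.mem_range, Nat.div_lt_iff_lt_mul (by positivity), ← pow_add]
        convert hrN using 2
        omega
      · rw [← hrk, Nat.mul_comm]; exact Nat.mod_add_div _ _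
    have hne : ∀ k ∈ T, k ≠ a := fun k hk h => ha (h ▸ hk)
    refine ⟨Function.update d a r, ?_, ?_, ?_⟩
    · intro k hk
      rcases Finset.mem_insert.1 hk with rfl | hk
      · simpa using hrN
      · simpa [hne k hk] using hd k hk
    · intro k hk
      rcases Finset.mem_insert.1 hk with rfl | hk
      · intro h
        rw [Function.update_self] at h
        exact hrB (h ▸ Finset.mem_insert_self _ _)
      · simpa [hne k hk] using hds k hk
    · intro k hk l hl hkl x hxk hxl
      rcases Finset.mem_insert.1 hk with rfl | hkT <;> rcases Finset.mem_insert.1 hl with rfl | hlT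
      · exact hkl rfl
      · rw [Function.update_self] at hxk
        rw [Function.update_of_ne (hne l hlT)] at hxl
        exact key l hlT x hxk hxl
      · rw [Function.update_self] at hxl
        rw [Function.update_of_ne (hne k hkT)] at hxk
        exact key k hkT x hxl hxk
      · rw [Function.update_of_ne (hne l hlT)] at hxl
        rw [Function.update_of_ne (hne k hkT)] at hxk
        exact hdd k hkT l hlT hkl x hxk hxl

theorem evenSpaced_spec {m n d x : ℕ} (hn : n ≤ m) (hd : d < 2 ^ (m - n))
    (hx : x ∈ evenSpaced m n d) : x < 2 ^ m ∧ x % 2 ^ (m - n) = d := by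
  obtain ⟨i, hi, rfl⟩ := Finset.mem_image.1 hx
  rw [Finset.mem_range] at hi
  refine ⟨?_, by simp [Nat.add_mul_mod_self_right, Nat.mod_eq_of_lt hd]⟩
  have h3 : 2 ^ n * 2 ^ (m - n) = 2 ^ m := by
    rw [← pow_add, Nat.add_sub_cancel' hn]
  have h4 : (i + 1) * 2 ^ (m - n) ≤ 2 ^ n * 2 ^ (m - n) := Nat.mul_le_mul_right _ hi
  rw [add_mul] at h4
  omega

/-- Corollary 3 (subcarrier allocation for direct-conversion receivers): with one
designated unavailable subcarrier `s`, any requests of sizes `2^{n_k}` totaling at most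
`2^m − 1` can be granted pairwise disjoint evenly-spaced sets avoiding `s`. -/
theorem ifdma_dcr_allocation (m : ℕ) (s : ℕ) (hs : s < 2 ^ m)
    (K : ℕ) (n : ℕ → ℕ) (hn : ∀ k < K, n k ≤ m)
    (hsum : ∑ k ∈ Finset.range K, 2 ^ n k ≤ 2 ^ m - 1) :
    ∃ S : ℕ → Finset ℕ,
      (∀ k < K, ∀ l < K, k ≠ l → Disjoint (S k) (S l)) ∧
      (∀ k < K, S k ⊆ Finset.range (2 ^ m) \ {s}) ∧
      (∀ k < K, ∃ d < 2 ^ (m - n k), S k = evenSpaced m (n k) d) := by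
  have hpos : 0 < 2 ^ m := by positivity
  obtain ⟨d, hd, hds, hdd⟩ := ifdma_greedy m s n (Finset.range K)
    (fun k hk => hn k (Finset.mem_range.1 hk)) (by omega)
  simp only [Finset.mem_range] at hd hds hdd
  refine ⟨fun k => evenSpaced m (n k) (d k), ?_, ?_, fun k hk => ⟨d k, hd k hk, rfl⟩⟩
  · intro k hk l hl hkl
    refine Finset.disjoint_left.2 fun x hx hy => ?_
    exact hdd k hk l hl hkl x (evenSpaced_spec (hn k hk) (hd k hk) hx).2
      (evenSpaced_spec (hn l hl) (hd l hl) hy).2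
  · intro k hk x hx
    obtain ⟨h1, h2⟩ := evenSpaced_spec (hn k hk) (hd k hk) hx
    rw [Finset.mem_sdiff, Finset.mem_range, Finset.mem_singleton]
    refine ⟨h1, ?_⟩
    rintro rfl
    exact hds k hk h2
end

section
/- (Theorem 6: strictly nonblocking property of asynchronous IFDMA under an offered-load limit.) Let m be a natural number and define C(m) = 2^{(m/2)+1} if m is even and C(m) = 3·2^{(m−1)/2} if m is odd. Then: (i) for every n ∈ {0,1,…,m} and every set B ⊆ {0,1,…,2^m−1} with |B| + 2^n < C(m), there exists an offset d with 0 ≤ d < 2^{m−n} such that the evenly-spaced set {d + i·2^{m−n} : i = 0,1,…,2^n−1} is disjoint from B; (ii) the bound is tight: there exist n ∈ {0,1,…,m} and a finite family of pairwise disjoint evenly-spaced sets in {0,1,…,2^m−1} whose total cardinality T satisfies T + 2^n = C(m), such that every evenly-spaced set of size 2^n intersects the union of the family. -/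
theorem pow_aux_even (a j : ℕ) : 2 ^ (a + j + 1) ≤ 2 ^ a + 2 ^ (a + 2 * j) := by
  have hy : 1 ≤ 2 ^ j := Nat.one_le_two_pow
  have e1 : 2 ^ (a + j + 1) = 2 ^ a * (2 * 2 ^ j) := by ring
  have e2 : 2 ^ a + 2 ^ (a + 2 * j) = 2 ^ a * (1 + 2 ^ j * 2 ^ j) := by ring
  rw [e1, e2]
  apply Nat.mul_le_mul_left
  generalize 2 ^ j = y at *
  obtain ⟨z, rfl⟩ := Nat.exists_eq_add_of_le hy
  nlinarith

theorem pow_aux_odd (a j : ℕ) : 3 * 2 ^ (a + j) ≤ 2 ^ a + 2 ^ (a + 2 * j + 1) := by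
  have hy : 1 ≤ 2 ^ j := Nat.one_le_two_pow
  have e1 : 3 * 2 ^ (a + j) = 2 ^ a * (3 * 2 ^ j) := by ring
  have e2 : 2 ^ a + 2 ^ (a + 2 * j + 1) = 2 ^ a * (1 + 2 * (2 ^ j * 2 ^ j)) := by ring
  rw [e1, e2]
  apply Nat.mul_le_mul_left
  generalize 2 ^ j = y at *
  obtain ⟨z, rfl⟩ := Nat.exists_eq_add_of_le hy
  nlinarith

theorem threshold_le (m n : ℕ) (hn : n ≤ m) :
    (if Even m then 2 ^ (m / 2 + 1) else 3 * 2 ^ ((m - 1) / 2)) ≤ 2 ^ (m - n) + 2 ^ n := by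
  split_ifs with h
  · obtain ⟨k, rfl⟩ := h
    rcases Nat.le_total n k with h | h
    · have := pow_aux_even n (k - n)
      rw [show n + (k - n) + 1 = (k + k) / 2 + 1 by omega,
        show n + 2 * (k - n) = k + k - n by omega] at this
      omega
    · have := pow_aux_even (k + k - n) (n - k)
      rw [show k + k - n + (n - k) + 1 = (k + k) / 2 + 1 by omega,
        show k + k - n + 2 * (n - k) = n by omega] at this
      omega
  · obtain ⟨k, rfl⟩ := Nat.not_even_iff_odd.mp h
    rcases le_or_gt n k with h | h
    · have := pow_aux_odd n (k - n)
      rw [show n + (k - n) = (2 * k + 1 - 1) / 2 by omega,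
        show n + 2 * (k - n) + 1 = 2 * k + 1 - n by omega] at this
      omega
    · have := pow_aux_odd (2 * k + 1 - n) (n - k - 1)
      rw [show 2 * k + 1 - n + (n - k - 1) = (2 * k + 1 - 1) / 2 by omega,
        show 2 * k + 1 - n + 2 * (n - k - 1) + 1 = n by omega] at this
      omega

theorem evenSpaced_zero (m l : ℕ) : evenSpaced m 0 l = {l} := by
  simp [evenSpaced]

/-- Theorem 6 (strictly nonblocking property of asynchronous IFDMA under an
offered-load limit): with `C(m) = 2^{m/2+1}` for even `m` and `3·2^{(m−1)/2}` for odd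
`m`, (i) whenever `|B| + 2^n < C(m)` some evenly-spaced set of size `2^n` avoids `B`;
and (ii) the bound is tight: some family of pairwise disjoint evenly-spaced sets of
total size `T` with `T + 2^n = C(m)` blocks every evenly-spaced set of size `2^n`. -/
theorem ifdma_strictly_nonblocking_threshold (m : ℕ) (C : ℕ)
    (hC : C = if Even m then 2 ^ (m / 2 + 1) else 3 * 2 ^ ((m - 1) / 2)) :
    (∀ n ≤ m, ∀ B : Finset ℕ, B ⊆ Finset.range (2 ^ m) → B.card + 2 ^ n < C →
      ∃ d < 2 ^ (m - n), Disjoint (evenSpaced m n d) B) ∧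
    (∃ n ≤ m, ∃ (L : ℕ) (sz off : ℕ → ℕ),
      (∀ l < L, sz l ≤ m ∧ off l < 2 ^ (m - sz l)) ∧
      (∀ l < L, ∀ l' < L, l ≠ l' →
        Disjoint (evenSpaced m (sz l) (off l)) (evenSpaced m (sz l') (off l'))) ∧
      (∑ l ∈ Finset.range L, 2 ^ sz l) + 2 ^ n = C ∧
      (∀ d < 2 ^ (m - n),
        (evenSpaced m n d ∩
          (Finset.range L).biUnion (fun l => evenSpaced m (sz l) (off l))).Nonempty)) := by
  constructor
  · intro n hn B _ hcard
    by_contra! hcon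
    have hsub : Finset.range (2 ^ (m - n)) ⊆ B.image (fun b => b % 2 ^ (m - n)) := by
      intro d hd
      have hd' := Finset.mem_range.mp hd
      obtain ⟨x, hx, hxB⟩ := Finset.not_disjoint_iff.mp (hcon d hd')
      obtain ⟨i, _, rfl⟩ := Finset.mem_image.mp hx
      refine Finset.mem_image.mpr ⟨_, hxB, ?_⟩
      simp [Nat.mod_eq_of_lt hd']
    have h1 := (Finset.card_le_card hsub).trans Finset.card_image_le
    rw [Finset.card_range] at h1
    have h2 := threshold_le m n hn
    rw [← hC] at h2
    omega
  · refine ⟨m / 2, Nat.div_le_self _ _, 2 ^ (m - m / 2), fun _ => 0, fun l => l, ?_, ?_, ?_, ?_⟩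
    · intro l hl
      exact ⟨Nat.zero_le _, hl.trans_le (Nat.pow_le_pow_right (by norm_num) (by simp))⟩
    · intro l _ l' _ hne
      simpa [evenSpaced_zero] using hne
    · simp only [pow_zero, Finset.sum_const, Finset.card_range, smul_eq_mul, mul_one]
      rw [hC]
      split_ifs with h
      · obtain ⟨k, rfl⟩ := h
        rw [show k + k - (k + k) / 2 = k by omega, show (k + k) / 2 = k by omega]
        ring
      · obtain ⟨k, rfl⟩ := Nat.not_even_iff_odd.mp h
        rw [show 2 * k + 1 - (2 * k + 1) / 2 = k + 1 by omega,
          show (2 * k + 1) / 2 = k by omega, show (2 * k + 1 - 1) / 2 = k by omega]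
        ring
    · intro d hd
      refine ⟨d, Finset.mem_inter.mpr ⟨?_, ?_⟩⟩
      · exact Finset.mem_image.mpr ⟨0, by simp, by simp⟩
      · exact Finset.mem_biUnion.mpr ⟨d, Finset.mem_range.mpr hd, by simp [evenSpaced_zero]⟩
end

section
/- (Proposition 8, counting part.) For a natural number m, call a family of subsets of {0,1,…,2^m−1} a state if its members are pairwise disjoint aligned blocks (each of some power-of-two size). Let f(m) be the number of states. Then f(0) = 2 and f(m) = f(m−1)² + 1 for every m ≥ 1. -/
/-- A state of the system with `2^m` bins: a family of pairwise disjoint aligned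
blocks (each of some power-of-two size) in `{0,…,2^m−1}`. -/
def IsState (m : ℕ) (S : Finset (Finset ℕ)) : Prop :=
  (∀ A ∈ S, ∃ i c, i ≤ m ∧ c < 2 ^ (m - i) ∧ A = alignedBlock i c) ∧
  (∀ A ∈ S, ∀ B ∈ S, A ≠ B → Disjoint A B)

def IsB (m : ℕ) (A : Finset ℕ) : Prop := ∃ i c, i ≤ m ∧ c < 2 ^ (m - i) ∧ A = alignedBlock i c

def shf (n : ℕ) : Finset ℕ ↪ Finset ℕ := (Finset.mapEmbedding (addLeftEmbedding (2 ^ n))).toEmbedding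

theorem mem_shf (n : ℕ) (A : Finset ℕ) (x : ℕ) : x ∈ shf n A ↔ 2 ^ n ≤ x ∧ x - 2 ^ n ∈ A := by
  simp only [shf, RelEmbedding.coe_toEmbedding, Finset.mapEmbedding_apply, Finset.mem_map,
    addLeftEmbedding_apply]
  constructor
  · rintro ⟨a, ha, rfl⟩
    simpa using ha
  · rintro ⟨h, h'⟩
    exact ⟨_, h', by omega⟩

theorem IsB.nonempty {m : ℕ} {A : Finset ℕ} (h : IsB m A) : A.Nonempty := by
  obtain ⟨i, c, _, _, rfl⟩ := h
  simp only [alignedBlock, Finset.nonempty_Ico]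
  have : 0 < 2 ^ i := by positivity
  nlinarith

theorem IsB.lt {m : ℕ} {A : Finset ℕ} (h : IsB m A) {x : ℕ} (hx : x ∈ A) : x < 2 ^ m := by
  obtain ⟨i, c, hi, hc, rfl⟩ := h
  simp only [alignedBlock, Finset.mem_Ico] at hx
  calc x < (c + 1) * 2 ^ i := hx.2
    _ ≤ 2 ^ (m - i) * 2 ^ i := Nat.mul_le_mul_right _ hc
    _ = 2 ^ m := by rw [← pow_add]; congr 1; omega

theorem shf_block (n i c : ℕ) (hi : i ≤ n) :
    shf n (alignedBlock i c) = alignedBlock i (c + 2 ^ (n - i)) := by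
  ext x
  have h : 2 ^ (n - i) * 2 ^ i = 2 ^ n := by rw [← pow_add]; congr 1; omega
  simp only [mem_shf, alignedBlock, Finset.mem_Ico, add_mul, h]
  omega

theorem isB_succ (n : ℕ) (A : Finset ℕ) :
    IsB (n + 1) A ↔ A = Finset.range (2 ^ (n + 1)) ∨ IsB n A ∨ ∃ B, IsB n B ∧ A = shf n B := by
  constructor
  · rintro ⟨i, c, hi, hc, rfl⟩
    rcases Nat.lt_or_ge n i with h | h
    · left
      obtain rfl : i = n + 1 := by omega
      obtain rfl : c = 0 := by simpa using hc
      ext x; simp [alignedBlock]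
    · right
      have e : 2 ^ (n + 1 - i) = 2 * 2 ^ (n - i) := by rw [← pow_succ']; congr 1; omega
      rcases Nat.lt_or_ge c (2 ^ (n - i)) with h' | h'
      · exact Or.inl ⟨i, c, h, h', rfl⟩
      · refine Or.inr ⟨_, ⟨i, c - 2 ^ (n - i), h, by omega, rfl⟩, ?_⟩
        rw [shf_block _ _ _ h]; congr 1; omega
  · have e : ∀ i, i ≤ n → 2 ^ (n + 1 - i) = 2 * 2 ^ (n - i) := by
      intro i hi; rw [← pow_succ']; congr 1; omega
    rintro (rfl | ⟨i, c, hi, hc, rfl⟩ | ⟨_, ⟨i, c, hi, hc, rfl⟩, rfl⟩)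
    · exact ⟨n + 1, 0, le_rfl, by simp, by ext x; simp [alignedBlock]⟩
    · exact ⟨i, c, by omega, by have := e i hi; omega, rfl⟩
    · exact ⟨i, _, by omega, by have := e i hi; omega, shf_block _ _ _ hi⟩

theorem not_isB_shf {n : ℕ} {A : Finset ℕ} (h : IsB n (shf n A)) : False := by
  obtain ⟨x, hx⟩ := h.nonempty
  have := h.lt hx
  rw [mem_shf] at hx
  omega

theorem not_isB_range {n : ℕ} (h : IsB n (Finset.range (2 ^ (n + 1)))) : False := by
  have := h.lt (x := 2 ^ n) (by simp [pow_succ])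
  omega

theorem shf_ne_range {n : ℕ} {A : Finset ℕ} (h : shf n A = Finset.range (2 ^ (n + 1))) : False := by
  have : 0 ∈ shf n A := by rw [h]; simp
  simp [mem_shf] at this

theorem shf_disj (n : ℕ) (A B : Finset ℕ) : Disjoint (shf n A) (shf n B) ↔ Disjoint A B := by
  simp [shf, Finset.mapEmbedding_apply]

theorem isB_disj {n : ℕ} {A B : Finset ℕ} (h : IsB n A) : Disjoint A (shf n B) := by
  rw [Finset.disjoint_left]
  intro x hx hx'
  have := h.lt hx
  rw [mem_shf] at hx'
  omega

theorem isState_full (n : ℕ) : IsState (n + 1) {Finset.range (2 ^ (n + 1))} := by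
  constructor
  · intro A hA
    exact (isB_succ n A).2 (Or.inl (by simpa using hA))
  · intro A hA B hB h
    simp only [Finset.mem_singleton] at hA hB
    exact absurd (hA.trans hB.symm) h

theorem isState_union {n : ℕ} {S T : Finset (Finset ℕ)} (hS : IsState n S) (hT : IsState n T) :
    IsState (n + 1) (S ∪ T.map (shf n)) := by
  constructor
  · intro A hA
    rw [Finset.mem_union, Finset.mem_map] at hA
    apply (isB_succ n A).2
    rcases hA with hA | ⟨B, hB, rfl⟩
    · exact Or.inr (Or.inl (hS.1 A hA))
    · exact Or.inr (Or.inr ⟨B, hT.1 B hB, rfl⟩)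
  · intro A hA B hB h
    rw [Finset.mem_union, Finset.mem_map] at hA hB
    rcases hA with hA | ⟨A, hA, rfl⟩ <;> rcases hB with hB | ⟨B, hB, rfl⟩
    · exact hS.2 A hA B hB h
    · exact isB_disj (hS.1 A hA)
    · exact (isB_disj (hS.1 B hB)).symm
    · rw [shf_disj]
      exact hT.2 A hA B hB (fun e => h (by rw [e]))

abbrev St (n : ℕ) := {S : Finset (Finset ℕ) // IsState n S}

def glue (n : ℕ) : Option (St n × St n) → St (n + 1)
  | none => ⟨_, isState_full n⟩
  | some p => ⟨_, isState_union p.1.2 p.2.2⟩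

theorem full_not_mem {n : ℕ} {S T : Finset (Finset ℕ)} (hS : IsState n S)
    (h : Finset.range (2 ^ (n + 1)) ∈ S ∪ T.map (shf n)) : False := by
  rw [Finset.mem_union, Finset.mem_map] at h
  rcases h with h | ⟨B, _, h⟩
  · exact not_isB_range (hS.1 _ h)
  · exact shf_ne_range h

theorem union_sub {n : ℕ} {S T S' T' : Finset (Finset ℕ)} (hS : IsState n S)
    (hS' : IsState n S') (h : S ∪ T.map (shf n) = S' ∪ T'.map (shf n)) : S ⊆ S' ∧ T ⊆ T' := by
  constructor
  · intro A hA
    have : A ∈ S' ∪ T'.map (shf n) := by rw [← h]; exact Finset.mem_union_left _ hA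
    rw [Finset.mem_union, Finset.mem_map] at this
    rcases this with h | ⟨B, _, rfl⟩
    · exact h
    · exact (not_isB_shf (hS.1 _ hA)).elim
  · intro A hA
    have : shf n A ∈ S' ∪ T'.map (shf n) := by
      rw [← h]; exact Finset.mem_union_right _ (Finset.mem_map_of_mem _ hA)
    rw [Finset.mem_union, Finset.mem_map'] at this
    rcases this with h | h
    · exact (not_isB_shf (hS'.1 _ h)).elim
    · exact h

theorem glue_inj (n : ℕ) : Function.Injective (glue n) := by
  rintro (_ | ⟨⟨S, hS⟩, ⟨T, hT⟩⟩) (_ | ⟨⟨S', hS'⟩, ⟨T', hT'⟩⟩) h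
  · rfl
  · have h := congrArg Subtype.val h
    simp only [glue] at h
    exact (full_not_mem hS' (by rw [← h]; simp)).elim
  · have h := congrArg Subtype.val h
    simp only [glue] at h
    exact (full_not_mem hS (by rw [h]; simp)).elim
  · have h := congrArg Subtype.val h
    simp only [glue] at h
    have h1 := union_sub hS hS' h
    have h2 := union_sub hS' hS h.symm
    obtain rfl := h1.1.antisymm h2.1
    obtain rfl := h1.2.antisymm h2.2
    rfl

theorem glue_surj (n : ℕ) : Function.Surjective (glue n) := by
  classical
  rintro ⟨S, hS⟩
  by_cases hf : Finset.range (2 ^ (n + 1)) ∈ S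
  · refine ⟨none, Subtype.ext ?_⟩
    simp only [glue]
    symm
    rw [Finset.eq_singleton_iff_unique_mem]
    refine ⟨hf, fun A hA => ?_⟩
    by_contra hne
    have hB : IsB (n + 1) A := hS.1 A hA
    obtain ⟨x, hx⟩ := hB.nonempty
    exact Finset.disjoint_left.1 (hS.2 A hA _ hf hne) hx (Finset.mem_range.2 (hB.lt hx))
  · have h1 : IsState n (S.filter (IsB n)) :=
      ⟨fun A hA => (Finset.mem_filter.1 hA).2, fun A hA B hB =>
        hS.2 A (Finset.mem_filter.1 hA).1 B (Finset.mem_filter.1 hB).1⟩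
    have h2 : IsState n (S.preimage (shf n) (shf n).injective.injOn) := by
      constructor
      · intro A hA
        rw [Finset.mem_preimage] at hA
        rcases (isB_succ n _).1 (hS.1 _ hA) with h | h | ⟨B, hB, h⟩
        · exact (shf_ne_range h).elim
        · exact (not_isB_shf h).elim
        · rw [(shf n).injective h]; exact hB
      · intro A hA B hB h
        rw [Finset.mem_preimage] at hA hB
        exact (shf_disj n A B).1 (hS.2 _ hA _ hB (fun e => h ((shf n).injective e)))
    refine ⟨some (⟨_, h1⟩, ⟨_, h2⟩), Subtype.ext ?_⟩
    simp only [glue]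
    ext A
    simp only [Finset.mem_union, Finset.mem_map, Finset.mem_filter, Finset.mem_preimage]
    constructor
    · rintro (h | ⟨B, h, rfl⟩)
      · exact h.1
      · exact h
    · intro hA
      rcases (isB_succ n _).1 (hS.1 _ hA) with h | h | ⟨B, hB, rfl⟩
      · exact (hf (h ▸ hA)).elim
      · exact Or.inl ⟨hA, h⟩
      · exact Or.inr ⟨B, hA, rfl⟩

theorem st_finite (n : ℕ) : Finite (St n) := by
  refine Set.Finite.subset (Finset.finite_toSet (Finset.range (2 ^ n)).powerset.powerset) ?_
  intro S hS
  simp only [Finset.mem_coe, Finset.mem_powerset]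
  intro A hA
  rw [Finset.mem_powerset]
  intro x hx
  exact Finset.mem_range.2 (IsB.lt (hS.1 A hA) hx)

theorem isState_zero (S : Finset (Finset ℕ)) : IsState 0 S ↔ S = ∅ ∨ S = {{0}} := by
  rw [← Finset.subset_singleton_iff]
  have e : alignedBlock 0 0 = {0} := by decide
  constructor
  · intro h A hA
    obtain ⟨i, c, hi, hc, rfl⟩ := h.1 A hA
    obtain rfl : i = 0 := by omega
    obtain rfl : c = 0 := by simpa using hc
    simp [e]
  · intro h
    refine ⟨fun A hA => ⟨0, 0, le_rfl, by simp, ?_⟩, fun A hA B hB hn => ?_⟩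
    · rw [e]; simpa using h hA
    · have h1 := h hA
      have h2 := h hB
      simp only [Finset.mem_singleton] at h1 h2
      exact absurd (h1.trans h2.symm) hn

/-- Proposition 8 (counting part): the number `f(m)` of states satisfies `f(0) = 2`
and `f(m) = f(m−1)² + 1` for `m ≥ 1`. -/
theorem state_count_recurrence :
    Nat.card {S : Finset (Finset ℕ) // IsState 0 S} = 2 ∧
    ∀ m : ℕ, 1 ≤ m →
      Nat.card {S : Finset (Finset ℕ) // IsState m S}
        = (Nat.card {S : Finset (Finset ℕ) // IsState (m - 1) S}) ^ 2 + 1 := by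
  constructor
  · simp only [isState_zero]
    have : Set.ncard ({∅, {{0}}} : Set (Finset (Finset ℕ))) = 2 :=
      Set.ncard_pair (Finset.singleton_ne_empty _).symm
    exact this
  · intro m hm
    obtain ⟨n, rfl⟩ : ∃ n, m = n + 1 := ⟨m - 1, by omega⟩
    have := st_finite n
    have h := Nat.card_congr (Equiv.ofBijective (glue n) ⟨glue_inj n, glue_surj n⟩)
    rw [Finite.card_option, Nat.card_prod, ← sq] at h
    exact h.symm
end

section
/- (Proposition 9, growth bound.) Let g : ℕ → ℕ satisfy g(0) = 2 and 2·g(m) = g(m−1)² + g(m−1) + 2 for every m ≥ 1 (equivalently g(m) = (1/2)·g(m−1)² + (1/2)·g(m−1) + 1). Then g(m) ≥ 2^{2^{m−1}+1} for every m ≥ 1. -/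
/-- Proposition 9 (growth bound): if `g(0) = 2` and `2·g(m) = g(m−1)² + g(m−1) + 2`
for `m ≥ 1`, then `g(m) ≥ 2^{2^{m−1}+1}` for every `m ≥ 1`. -/
theorem super_state_count_growth (g : ℕ → ℕ) (h0 : g 0 = 2)
    (hrec : ∀ m, 1 ≤ m → 2 * g m = g (m - 1) ^ 2 + g (m - 1) + 2) :
    ∀ m, 1 ≤ m → 2 ^ (2 ^ (m - 1) + 1) ≤ g m := by
  intro m hm
  induction m, hm using Nat.le_induction with
  | base =>
    have h := hrec 1 le_rfl
    simp [h0] at h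
    simp
    omega
  | succ n hn ih =>
    have h := hrec (n + 1) (by omega)
    obtain ⟨k, rfl⟩ : ∃ k, n = k + 1 := ⟨n - 1, by omega⟩
    simp only [Nat.add_sub_cancel] at h ih ⊢
    have h2 := Nat.pow_le_pow_left ih 2
    have h3 : (2 ^ (2 ^ k + 1)) ^ 2 = 2 * 2 ^ (2 ^ (k + 1) + 1) := by
      rw [← pow_mul, ← pow_succ']
      congr 1
      ring
    rw [h3] at h2
    omega
end

section
/- (Corollary 10: full loading is possible for composite-M IFDMA.) Let p_0, p_1, …, p_{T−1} be integers each at least 2, let M = p_0·p_1·⋯·p_{T−1}, and for 0 ≤ s ≤ T let P_s = p_0·p_1·⋯·p_{s−1} (with P_0 = 1 and P_T = M). Suppose N_1, …, N_K are request sizes, each equal to P_{s_k} for some s_k ∈ {0,1,…,T}, with ∑_{k=1}^K N_k ≤ M. Then there exist pairwise disjoint sets S_1, …, S_K ⊆ {0,1,…,M−1} such that for each k, S_k = {d_k + i·(M/N_k) : i = 0,1,…,N_k−1} for some offset d_k with 0 ≤ d_k < M/N_k. -/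
theorem ifdma_mem_image (n q d x : ℕ) (hd : d < q) :
    x ∈ Finset.image (fun i => d + i * q) (Finset.range n) ↔ x < n * q ∧ x % q = d := by
  simp only [Finset.mem_image, Finset.mem_range]
  constructor
  · rintro ⟨i, hi, rfl⟩
    refine ⟨?_, ?_⟩
    · have : (i + 1) * q ≤ n * q := Nat.mul_le_mul_right q hi
      nlinarith
    · rw [Nat.add_mul_mod_self_right, Nat.mod_eq_of_lt hd]
  · rintro ⟨h1, h2⟩
    refine ⟨x / q, Nat.div_lt_of_lt_mul (by rwa [mul_comm]), ?_⟩
    rw [← h2, mul_comm]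
    exact Nat.mod_add_div x q

theorem ifdma_greedy_s16 (M : ℕ) (N : ℕ → ℕ) (A : Finset ℕ) (hM : 0 < M)
    (hdvd : ∀ k ∈ A, N k ∣ M)
    (hch : ∀ k ∈ A, ∀ l ∈ A, N k ≤ N l → N k ∣ N l)
    (hsum : ∑ k ∈ A, N k ≤ M) :
    ∃ d : ℕ → ℕ, (∀ k ∈ A, d k < M / N k) ∧
      ∀ k ∈ A, ∀ l ∈ A, k ≠ l → ∀ x < M, ¬ (x % (M / N k) = d k ∧ x % (M / N l) = d l) := by
  induction A using Finset.induction_on_min_value N with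
  | empty => exact ⟨fun _ => 0, by simp, by simp⟩
  | insert a s ha hmin ih =>
    rw [Finset.sum_insert ha] at hsum
    obtain ⟨d, hd, hdis⟩ := ih (fun k hk => hdvd k (Finset.mem_insert_of_mem hk))
      (fun k hk l hl => hch k (Finset.mem_insert_of_mem hk) l (Finset.mem_insert_of_mem hl))
      (by omega)
    have hda := hdvd a (Finset.mem_insert_self a s)
    have hNa : 0 < N a := Nat.pos_of_dvd_of_pos hda hM
    have hqa : 0 < M / N a := Nat.div_pos (Nat.le_of_dvd hM hda) hNa
    have hcard : (s.biUnion fun k => Finset.image (fun i => d k + i * (M / N k))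
        (Finset.range (N k))).card < (Finset.range M).card := by
      refine lt_of_le_of_lt (Finset.card_biUnion_le.trans (Finset.sum_le_sum
        (g := N) fun k _ => ?_)) ?_
      · exact Finset.card_image_le.trans (by simp)
      · rw [Finset.card_range]; omega
    obtain ⟨x, hx, hxn⟩ := Finset.exists_mem_notMem_of_card_lt_card hcard
    have hxM := Finset.mem_range.1 hx
    have key : ∀ l ∈ s, ∀ y < M, y % (M / N a) = x % (M / N a) → y % (M / N l) ≠ d l := by
      intro l hl y _ hya hyl
      apply hxn
      rw [Finset.mem_biUnion]
      refine ⟨l, hl, (ifdma_mem_image _ _ _ _ (hd l hl)).2 ⟨?_, ?_⟩⟩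
      · rw [Nat.mul_div_cancel' (hdvd l (Finset.mem_insert_of_mem hl))]
        exact hxM
      · have hq : M / N l ∣ M / N a :=
          Nat.div_dvd_div_left (hdvd l (Finset.mem_insert_of_mem hl))
            (hch a (Finset.mem_insert_self a s) l (Finset.mem_insert_of_mem hl) (hmin l hl))
        rw [← hyl, ← Nat.mod_mod_of_dvd x hq, ← hya, Nat.mod_mod_of_dvd y hq]
    have hne : ∀ l ∈ s, l ≠ a := fun l hl h => ha (h ▸ hl)
    refine ⟨Function.update d a (x % (M / N a)), ?_, ?_⟩
    · intro k hk
      rcases Finset.mem_insert.1 hk with rfl | hk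
      · simpa using Nat.mod_lt _ hqa
      · rw [Function.update_of_ne (hne k hk)]; exact hd k hk
    · intro k hk l hl hkl y hy
      rcases Finset.mem_insert.1 hk with rfl | hks <;>
        rcases Finset.mem_insert.1 hl with rfl | hls
      · exact absurd rfl hkl
      · rw [Function.update_self, Function.update_of_ne (hne l hls)]
        exact fun h => key l hls y hy h.1 h.2
      · rw [Function.update_self, Function.update_of_ne (hne k hks)]
        exact fun h => key k hks y hy h.2 h.1
      · rw [Function.update_of_ne (hne k hks), Function.update_of_ne (hne l hls)]
        exact hdis k hks l hls hkl y hy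


/-- Corollary 10 (full loading is possible for composite-`M` IFDMA): with
`M = p_0·⋯·p_{T−1}` and request sizes in the chain `{P_s = p_0·⋯·p_{s−1}}` totaling at
most `M`, the requests can be granted pairwise disjoint evenly-spaced subcarrier sets
`{d_k + i·(M/N_k) : i = 0,…,N_k−1}` with `0 ≤ d_k < M/N_k`. -/
theorem composite_ifdma_full_loading (T : ℕ) (p : ℕ → ℕ) (hp : ∀ t < T, 2 ≤ p t)
    (K : ℕ) (N : ℕ → ℕ)
    (hN : ∀ k < K, ∃ s ≤ T, N k = ∏ t ∈ Finset.range s, p t)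
    (hsum : ∑ k ∈ Finset.range K, N k ≤ ∏ t ∈ Finset.range T, p t) :
    ∃ S : ℕ → Finset ℕ,
      (∀ k < K, ∀ l < K, k ≠ l → Disjoint (S k) (S l)) ∧
      (∀ k < K, S k ⊆ Finset.range (∏ t ∈ Finset.range T, p t)) ∧
      (∀ k < K, ∃ d < (∏ t ∈ Finset.range T, p t) / N k,
        S k = Finset.image
          (fun i => d + i * ((∏ t ∈ Finset.range T, p t) / N k))
          (Finset.range (N k))) := by
  have hpos : ∀ s ≤ T, 0 < ∏ t ∈ Finset.range s, p t := fun s hs =>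
    Finset.prod_pos fun t ht => by
      have := hp t (lt_of_lt_of_le (Finset.mem_range.1 ht) hs)
      omega
  have hmono : ∀ s s' : ℕ, s ≤ s' →
      (∏ t ∈ Finset.range s, p t) ∣ ∏ t ∈ Finset.range s', p t := fun s s' h =>
    Finset.prod_dvd_prod_of_subset _ _ _ (Finset.range_subset_range.2 h)
  have hdvd : ∀ k < K, N k ∣ ∏ t ∈ Finset.range T, p t := by
    intro k hk
    obtain ⟨s, hs, h⟩ := hN k hk
    rw [h]; exact hmono s T hs
  obtain ⟨d, hd, hdis⟩ := ifdma_greedy_s16 (∏ t ∈ Finset.range T, p t) N (Finset.range K)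
    (hpos T le_rfl) (fun k hk => hdvd k (Finset.mem_range.1 hk))
    (by
      intro k hk l hl hkl
      obtain ⟨s, hs, h⟩ := hN k (Finset.mem_range.1 hk)
      obtain ⟨s', hs', h'⟩ := hN l (Finset.mem_range.1 hl)
      rw [h, h'] at hkl ⊢
      rcases le_total s s' with hss | hss
      · exact hmono s s' hss
      · exact (le_antisymm hkl (Nat.le_of_dvd (hpos s hs) (hmono s' s hss))).dvd) hsum
  have hmem : ∀ k < K, ∀ x, x ∈ Finset.image
      (fun i => d k + i * ((∏ t ∈ Finset.range T, p t) / N k)) (Finset.range (N k)) ↔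
      x < (∏ t ∈ Finset.range T, p t) ∧ x % ((∏ t ∈ Finset.range T, p t) / N k) = d k := by
    intro k hk x
    rw [ifdma_mem_image _ _ _ _ (hd k (Finset.mem_range.2 hk)), Nat.mul_div_cancel' (hdvd k hk)]
  refine ⟨fun k => Finset.image
      (fun i => d k + i * ((∏ t ∈ Finset.range T, p t) / N k)) (Finset.range (N k)), ?_, ?_, ?_⟩
  · intro k hk l hl hkl
    rw [Finset.disjoint_left]
    intro x hx hx'
    have h1 := (hmem k hk x).1 hx
    have h2 := (hmem l hl x).1 hx'
    exact hdis k (Finset.mem_range.2 hk) l (Finset.mem_range.2 hl) hkl x h1.1 ⟨h1.2, h2.2⟩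
  · intro k hk x hx
    exact Finset.mem_range.2 ((hmem k hk x).1 hx).1
  · intro k hk
    exact ⟨d k, hd k (Finset.mem_range.2 hk), rfl⟩
end

section
/- (Digit reversal for composite M.) Let p_0, p_1, …, p_{T−1} be integers each at least 2, let M = p_0·p_1·⋯·p_{T−1}, and for 0 ≤ s ≤ T let P_s = p_0·p_1·⋯·p_{s−1} (so P_0 = 1, P_T = M). Define the digit-reversal map ρ on {0,1,…,M−1} by ρ(k) = ∑_{t=0}^{T−1} d_t·(M/P_{t+1}), where k = ∑_{t=0}^{T−1} d_t·P_t is the unique mixed-radix expansion of k with 0 ≤ d_t < p_t for each t. Then: (i) ρ is a bijection of {0,1,…,M−1} onto itself; (ii) for every s ∈ {0,1,…,T} and every j with 0 ≤ j < M/P_s, the image under ρ of the contiguous block {j·P_s, j·P_s+1, …, j·P_s + P_s − 1} equals {d + i·(M/P_s) : i = 0,1,…,P_s−1} for some offset d with 0 ≤ d < M/P_s. -/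
/-- The partial product `P_s = p_0·p_1·⋯·p_{s−1}` (so `P_0 = 1`). -/
def partialProd (p : ℕ → ℕ) (s : ℕ) : ℕ := ∏ t ∈ Finset.range s, p t

/-- The digit-reversal map for mixed radix `p_0, …, p_{T−1}`: `k = ∑_t d_t·P_t`
(with digits `0 ≤ d_t < p_t`) is sent to `∑_t d_t·(M/P_{t+1})`, where `M = P_T`. -/
def digitRev (p : ℕ → ℕ) (T k : ℕ) : ℕ :=
  ∑ t ∈ Finset.range T, (k / partialProd p t % p t) * (partialProd p T / partialProd p (t + 1))

theorem pp_pos (p : ℕ → ℕ) (T : ℕ) (hp : ∀ t < T, 2 ≤ p t) : 0 < partialProd p T := by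
  unfold partialProd
  refine Finset.prod_pos fun t ht => ?_
  have := hp t (Finset.mem_range.1 ht)
  omega

theorem pp_succ (p : ℕ → ℕ) (T : ℕ) : partialProd p (T + 1) = partialProd p T * p T := by
  simp [partialProd, Finset.prod_range_succ]

theorem pp_dvd (p : ℕ → ℕ) {s T : ℕ} (h : s ≤ T) : partialProd p s ∣ partialProd p T := by
  unfold partialProd
  exact Finset.prod_dvd_prod_of_subset _ _ _ (Finset.range_mono h)

theorem rev_succ (p : ℕ → ℕ) (T : ℕ) (hp : ∀ t < T + 1, 2 ≤ p t) (k : ℕ) :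
    digitRev p (T + 1) k = digitRev p T k * p T + k / partialProd p T % p T := by
  unfold digitRev
  rw [Finset.sum_range_succ, Nat.div_self (pp_pos p (T + 1) hp), mul_one, Finset.sum_mul]
  congr 1
  refine Finset.sum_congr rfl fun t ht => ?_
  rw [pp_succ p T, Nat.mul_comm (partialProd p T) (p T),
    Nat.mul_div_assoc _ (pp_dvd p (Nat.succ_le_of_lt (Finset.mem_range.1 ht)))]
  ring

theorem rev_lt (p : ℕ → ℕ) (T : ℕ) (hp : ∀ t < T, 2 ≤ p t) (k : ℕ) :
    digitRev p T k < partialProd p T := by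
  induction T with
  | zero => simp [digitRev, partialProd]
  | succ T ih =>
    rw [rev_succ p T hp, pp_succ]
    have h1 := ih fun t ht => hp t (by omega)
    have h2 : k / partialProd p T % p T < p T := Nat.mod_lt _ (by have := hp T (by omega); omega)
    nlinarith

theorem add_inj_aux {a b c d q : ℕ} (hb : b < q) (hd : d < q) :
    a * q + b = c * q + d ↔ a = c ∧ b = d := by
  constructor
  · intro h
    have h1 := congrArg (· / q) h
    have h2 := congrArg (· % q) h
    have hq : 0 < q := by omega
    simp only [Nat.mul_add_mod_self_right, Nat.mod_eq_of_lt hb, Nat.mod_eq_of_lt hd] at h2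
    subst h2
    have : a * q = c * q := by omega
    exact ⟨Nat.eq_of_mul_eq_mul_right hq this, rfl⟩
  · rintro ⟨rfl, rfl⟩; rfl

theorem rev_eq_iff (p : ℕ → ℕ) (T : ℕ) (hp : ∀ t < T, 2 ≤ p t) (k l : ℕ) :
    digitRev p T k = digitRev p T l ↔ k % partialProd p T = l % partialProd p T := by
  induction T with
  | zero => simp [digitRev, partialProd, Nat.mod_one]
  | succ T ih =>
    have hp' : ∀ t < T, 2 ≤ p t := fun t ht => hp t (by omega)
    have hq : 0 < p T := by have := hp T (by omega); omega
    have hP := pp_pos p T hp'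
    rw [rev_succ p T hp, rev_succ p T hp, pp_succ, Nat.mod_mul, Nat.mod_mul,
      add_inj_aux (Nat.mod_lt _ hq) (Nat.mod_lt _ hq), ih hp',
      Nat.add_comm (k % _), Nat.add_comm (l % _), Nat.mul_comm (partialProd p T),
      Nat.mul_comm (partialProd p T), add_inj_aux (Nat.mod_lt _ hP) (Nat.mod_lt _ hP)]
    exact and_comm

theorem rev_split (p : ℕ → ℕ) (s n : ℕ) (hp : ∀ t < s + n, 2 ≤ p t) :
    ∃ g : ℕ → ℕ, ∀ k, g (k / partialProd p s) < partialProd p (s + n) / partialProd p s ∧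
      digitRev p (s + n) k = g (k / partialProd p s) +
        digitRev p s k * (partialProd p (s + n) / partialProd p s) := by
  induction n with
  | zero =>
    refine ⟨fun _ => 0, fun k => ?_⟩
    simp [Nat.div_self (pp_pos p s hp)]
  | succ n ih =>
    obtain ⟨g, hg⟩ := ih fun t ht => hp t (by omega)
    have hPs := pp_pos p s fun t ht => hp t (by omega)
    have hq : 0 < p (s + n) := by have := hp (s + n) (by omega); omega
    obtain ⟨Q, hQ⟩ := pp_dvd p (Nat.le_add_right s n)
    have e1 : partialProd p (s + n) / partialProd p s = Q := by
      rw [hQ, Nat.mul_div_cancel_left _ hPs]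
    have e2 : partialProd p (s + (n + 1)) / partialProd p s = Q * p (s + n) := by
      rw [← add_assoc, pp_succ, hQ, mul_assoc, Nat.mul_div_cancel_left _ hPs]
    rw [e1] at hg
    rw [e2]
    refine ⟨fun x => g x * p (s + n) + x / Q % p (s + n), fun k => ⟨?_, ?_⟩⟩
    · have h1 := (hg k).1
      have h2 : k / partialProd p s / Q % p (s + n) < p (s + n) := Nat.mod_lt _ hq
      show g (k / partialProd p s) * p (s + n) + k / partialProd p s / Q % p (s + n) < _
      nlinarith
    · rw [← add_assoc, rev_succ p (s + n) hp, (hg k).2, hQ, ← Nat.div_div_eq_div_mul]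
      ring

theorem rev_image (p : ℕ → ℕ) (s : ℕ) (hp : ∀ t < s, 2 ≤ p t) :
    Finset.image (digitRev p s) (Finset.range (partialProd p s))
      = Finset.range (partialProd p s) := by
  apply Finset.eq_of_subset_of_card_le
  · intro x hx
    obtain ⟨k, -, rfl⟩ := Finset.mem_image.1 hx
    exact Finset.mem_range.2 (rev_lt p s hp k)
  · rw [Finset.card_image_of_injOn]
    intro k hk l hl h
    have h' := (rev_eq_iff p s hp k l).1 h
    simp only [Finset.coe_range, Set.mem_Iio] at hk hl
    rwa [Nat.mod_eq_of_lt hk, Nat.mod_eq_of_lt hl] at h'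

/-- Digit reversal for composite `M = p_0·⋯·p_{T−1}`: (i) the digit-reversal map is a
bijection of `{0,…,M−1}` onto itself; (ii) it maps every contiguous block of size
`P_s` starting at a multiple of `P_s` onto an evenly-spaced set
`{d + i·(M/P_s) : i = 0,…,P_s−1}` for some `0 ≤ d < M/P_s`. -/
theorem digitRev_bijective_and_block_to_evenly_spaced
    (T : ℕ) (p : ℕ → ℕ) (hp : ∀ t < T, 2 ≤ p t) :
    Set.BijOn (digitRev p T) (Set.Iio (partialProd p T)) (Set.Iio (partialProd p T)) ∧
    ∀ s ≤ T, ∀ j < partialProd p T / partialProd p s,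
      ∃ d < partialProd p T / partialProd p s,
        Finset.image (digitRev p T)
            (Finset.Ico (j * partialProd p s) (j * partialProd p s + partialProd p s))
          = Finset.image (fun i => d + i * (partialProd p T / partialProd p s))
              (Finset.range (partialProd p s)) := by
  constructor
  · refine ⟨fun k _ => rev_lt p T hp k, ?_, ?_⟩
    · intro k hk l hl h
      have h' := (rev_eq_iff p T hp k l).1 h
      simp only [Set.mem_Iio] at hk hl
      rwa [Nat.mod_eq_of_lt hk, Nat.mod_eq_of_lt hl] at h'
    · intro x hx
      have hx' : x ∈ Finset.range (partialProd p T) := Finset.mem_range.2 hx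
      rw [← rev_image p T hp] at hx'
      obtain ⟨k, hk, rfl⟩ := Finset.mem_image.1 hx'
      exact ⟨k, Finset.mem_range.1 hk, rfl⟩
  · intro s hs j _
    obtain ⟨n, rfl⟩ := Nat.exists_eq_add_of_le hs
    have hp' : ∀ t < s, 2 ≤ p t := fun t ht => hp t (by omega)
    have hPs := pp_pos p s hp'
    obtain ⟨g, hg⟩ := rev_split p s n hp
    have hdiv : ∀ r < partialProd p s, (j * partialProd p s + r) / partialProd p s = j := by
      intro r hr
      rw [Nat.mul_comm, Nat.mul_add_div hPs, Nat.div_eq_of_lt hr, Nat.add_zero]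
    refine ⟨g j, ?_, ?_⟩
    · have := (hg (j * partialProd p s + 0)).1
      rwa [hdiv 0 hPs] at this
    · have hI : Finset.Ico (j * partialProd p s) (j * partialProd p s + partialProd p s)
          = Finset.image (fun r => j * partialProd p s + r)
              (Finset.range (partialProd p s)) := by
        ext x
        simp only [Finset.mem_Ico, Finset.mem_image, Finset.mem_range]
        constructor
        · rintro ⟨h1, h2⟩
          exact ⟨x - j * partialProd p s, by omega, by omega⟩
        · rintro ⟨r, hr, rfl⟩
          omega
      conv_rhs => rw [← rev_image p s hp']
      rw [hI, Finset.image_image, Finset.image_image]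
      refine Finset.image_congr fun r hr => ?_
      have hr' : r < partialProd p s := by simpa using hr
      have h1 : digitRev p s (j * partialProd p s + r) = digitRev p s r :=
        (rev_eq_iff p s hp' _ _).2 (by simp)
      simp only [Function.comp]
      rw [(hg _).2, hdiv r hr', h1]
end
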